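/- Let (q_n)_{n≥2} be nonnegative reals with q_n = 0 whenever n is even, ∑_{n≥2} q_n = 1, and ∑_{n≥2} n²·q_n < ∞, and define f(t) = ∑_{n≥2} q_n·f_n(t) for t ∈ [0,1]. Then f is strictly increasing on [0,1], admits a unique fixed point α in (0,1), α < 1/2, and for every x_0 ∈ (0,1) the sequence of iterates u_0 = x_0, u_{m+1} = f(u_m) converges to α. -/

import Mathlib

open Real Filter Finset

/-- `f n t = ∑_{k, 0 ≤ 2k ≤ n} C(n,2k)·C(2k,k)·((1−t)/2)^{2k}·t^{n−2k}` -/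
noncomputable def f (n : ℕ) (t : ℝ) : ℝ :=
  ∑ k ∈ Finset.range (n / 2 + 1),
    (n.choose (2 * k) : ℝ) * ((2 * k).choose k : ℝ) * ((1 - t) / 2) ^ (2 * k) * t ^ (n - 2 * k)

/-!
The number `f n t` is the `n`-th moment of `t + (1 - t) X`, where `X` has the arcsine law on
`[-1, 1]`. For odd `n` the integrand increases with `t`, so `f n` does too; at `t = 1 / 2` it is the
`n`-th power of a number in `[0, 1]` of mean `1 / 2`, so `f n (1 / 2) < 1 / 2` once `n ≥ 2`.
For odd `n` the moment of `(1 - t) X` vanishes, and subtracting it gives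
`f n t = t * ∫ w in 0..1, n * E[(w t + (1 - t) X) ^ (n - 1)]`. The exponent `n - 1` is even and its
base is affine in `t`, so `f n t / t` is convex; its value at `0` is
`n * C(n - 1, (n - 1) / 2) / 2 ^ (n - 1)`, which exceeds `1` for `n ≥ 3`. These facts pass to the
mixture `g = ∑ q n * f n`: the convex function `g t / t` is larger than `1` near `0`, smaller
than `1` at `1 / 2` and equal to `1` at `1`. So it crosses `1` exactly once in `(0, 1)`, before
`1 / 2`, and monotone iteration converges to the crossing point.
-/

open scoped Topology

section General

theorem convexOn_intervalIntegral {E : Type*} [AddCommGroup E] [Module ℝ E] {s : Set E}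
    {φ : E → ℝ → ℝ} {a b : ℝ} (hab : a ≤ b)
    (hint : ∀ x ∈ s, IntervalIntegrable (φ x) MeasureTheory.volume a b)
    (hφ : ∀ θ ∈ Set.Icc a b, ConvexOn ℝ s fun x => φ x θ) :
    ConvexOn ℝ s fun x => ∫ θ in a..b, φ x θ := by
  have hs : Convex ℝ s := (hφ a ⟨le_rfl, hab⟩).1
  refine ⟨hs, fun x hx y hy c d hc hd hcd => ?_⟩
  have hintx := (hint x hx).const_mul c
  have hinty := (hint y hy).const_mul d
  simp only [smul_eq_mul]
  rw [← intervalIntegral.integral_const_mul, ← intervalIntegral.integral_const_mul,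
    ← intervalIntegral.integral_add hintx hinty]
  exact intervalIntegral.integral_mono_on hab (hint _ (hs hx hy hc hd hcd)) (hintx.add hinty)
    fun θ hθ => (hφ θ hθ).2 hx hy hc hd hcd

theorem convexOn_tsum {ι E : Type*} [AddCommGroup E] [Module ℝ E] {s : Set E} {φ : ι → E → ℝ}
    (hs : Convex ℝ s) (hsum : ∀ x ∈ s, Summable fun i => φ i x)
    (hφ : ∀ i, ConvexOn ℝ s (φ i)) : ConvexOn ℝ s fun x => ∑' i, φ i x := by
  refine ⟨hs, fun x hx y hy c d hc hd hcd => ?_⟩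
  have hsumx := (hsum x hx).mul_left c
  have hsumy := (hsum y hy).mul_left d
  simp only [smul_eq_mul]
  rw [← tsum_mul_left, ← tsum_mul_left, ← hsumx.tsum_add hsumy]
  exact (hsum _ (hs hx hy hc hd hcd)).tsum_le_tsum (fun i => (hφ i).2 hx hy hc hd hcd)
    (hsumx.add hsumy)

theorem lt_of_convexOn_of_mem_Ioo {s : Set ℝ} {h : ℝ → ℝ} (hh : ConvexOn ℝ s h) {a b p t c : ℝ}
    (ha : a ∈ s) (hb : b ∈ s) (hac : h a ≤ c) (hbc : h b ≤ c) (hp : p ∈ Set.Ioo a b)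
    (hpc : h p < c) (ht : t ∈ Set.Ioo a b) : h t < c := by
  have hps : p ∈ s := hh.1.ordConnected.out ha hb ⟨hp.1.le, hp.2.le⟩
  by_contra! hct
  rcases lt_trichotomy t p with htp | rfl | hpt
  · have htseg : t ∈ openSegment ℝ a p := by
      rw [openSegment_eq_Ioo hp.1]
      exact ⟨ht.1, htp⟩
    exact absurd (hh.lt_left_of_right_lt ha hps htseg (hpc.trans_le hct)) (by linarith)
  · exact absurd hpc hct.not_gt
  · have htseg : t ∈ openSegment ℝ p b := by
      rw [openSegment_eq_Ioo hp.2]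
      exact ⟨hpt, ht.2⟩
    exact absurd (hh.lt_right_of_left_lt hps hb htseg (hpc.trans_le hct)) (by linarith)

variable {X : Type*} [ConditionallyCompleteLinearOrder X] [TopologicalSpace X] [OrderTopology X]
  {g : X → X} {x α : X}

theorem tendsto_iterate_of_forall_self_lt (hxα : x ≤ α) (hmono : MonotoneOn g (Set.Icc x α))
    (hcont : ContinuousOn g (Set.Icc x α)) (hα : g α = α) (hlt : ∀ t ∈ Set.Ico x α, t < g t) :
    Tendsto (fun m => g^[m] x) atTop (𝓝 α) := by
  have hle : ∀ t ∈ Set.Icc x α, t ≤ g t := by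
    intro t ht
    rcases ht.2.eq_or_lt with rfl | htα
    · exact hα.ge
    · exact (hlt t ⟨ht.1, htα⟩).le
  have hmaps : Set.MapsTo g (Set.Icc x α) (Set.Icc x α) := fun t ht =>
    ⟨ht.1.trans (hle t ht), (hmono ht ⟨hxα, le_rfl⟩ ht.2).trans_eq hα⟩
  have hmem : ∀ m, g^[m] x ∈ Set.Icc x α := fun m => hmaps.iterate m ⟨le_rfl, hxα⟩
  have hiter : Monotone fun m => g^[m] x := monotone_nat_of_le_succ fun m => by
    rw [Function.iterate_succ_apply']
    exact hle _ (hmem m)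
  obtain ⟨L, hL⟩ : ∃ L, Tendsto (fun m => g^[m] x) atTop (𝓝 L) :=
    ⟨_, tendsto_atTop_ciSup hiter ⟨α, Set.forall_mem_range.2 fun m => (hmem m).2⟩⟩
  have hLmem : L ∈ Set.Icc x α := isClosed_Icc.mem_of_tendsto hL (Eventually.of_forall hmem)
  have hLfix : g L = L := by
    refine tendsto_nhds_unique ((hcont L hLmem).tendsto.comp
      (tendsto_nhdsWithin_iff.2 ⟨hL, Eventually.of_forall hmem⟩)) ?_
    simpa only [Function.comp_def, Function.iterate_succ_apply'] using
      hL.comp (tendsto_add_atTop_nat 1)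
  rcases hLmem.2.eq_or_lt with rfl | hLα
  · exact hL
  · exact absurd hLfix (hlt L ⟨hLmem.1, hLα⟩).ne'

theorem tendsto_iterate_of_forall_lt_self (hαx : α ≤ x) (hmono : MonotoneOn g (Set.Icc α x))
    (hcont : ContinuousOn g (Set.Icc α x)) (hα : g α = α) (hlt : ∀ t ∈ Set.Ioc α x, g t < t) :
    Tendsto (fun m => g^[m] x) atTop (𝓝 α) :=
  tendsto_iterate_of_forall_self_lt (X := Xᵒᵈ) hαx
    (fun _ hs _ ht hst => hmono ht.symm hs.symm hst)
    (hcont.mono fun _ ht => ht.symm) hα fun t ht => hlt t ht.symm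

end General

section ConvexRatio

variable {g : ℝ → ℝ} {α p b : ℝ} (hconv : ConvexOn ℝ (Set.Ioc 0 b) fun t => g t / t)
  (hα : 0 < α) (hgα : g α = α) (hαp : α < p) (hgp : g p < p) (hpb : p < b)
include hconv hα hgα hαp hgp hpb

theorem map_lt_self_of_convexOn_div (hgb : g b ≤ b) {t : ℝ} (ht : t ∈ Set.Ioo α b) : g t < t := by
  have hp : 0 < p := hα.trans hαp
  have hb : 0 < b := hp.trans hpb
  rw [← div_lt_one (hα.trans ht.1)]
  exact lt_of_convexOn_of_mem_Ioo hconv ⟨hα, (hαp.trans hpb).le⟩ ⟨hb, le_rfl⟩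
    ((div_le_one hα).2 hgα.le) ((div_le_one hb).2 hgb) ⟨hαp, hpb⟩ ((div_lt_one hp).2 hgp) ht

theorem self_lt_map_of_convexOn_div {t : ℝ} (ht : t ∈ Set.Ioo 0 α) : t < g t := by
  have hp : 0 < p := hα.trans hαp
  have hαseg : α ∈ openSegment ℝ t p := by
    rw [openSegment_eq_Ioo (ht.2.trans hαp)]
    exact ⟨ht.2, hαp⟩
  have hgα' : g α / α = 1 := by rw [hgα, div_self hα.ne']
  rw [← one_lt_div ht.1, ← hgα']
  refine hconv.lt_left_of_right_lt ⟨ht.1, (ht.2.trans (hαp.trans hpb)).le⟩ ⟨hp, hpb.le⟩ hαseg ?_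
  rwa [hgα', div_lt_one hp]

theorem eq_of_convexOn_div_of_map_eq_self (hgb : g b ≤ b) {t : ℝ} (ht : t ∈ Set.Ioo 0 b)
    (hgt : g t = t) : t = α := by
  rcases lt_trichotomy t α with htα | htα | hαt
  · exact absurd hgt
      (self_lt_map_of_convexOn_div hconv hα hgα hαp hgp hpb ⟨ht.1, htα⟩).ne'
  · exact htα
  · exact absurd hgt
      (map_lt_self_of_convexOn_div hconv hα hgα hαp hgp hpb hgb ⟨hαt, ht.2⟩).ne

theorem tendsto_iterate_of_convexOn_div (hgb : g b ≤ b) (hmono : MonotoneOn g (Set.Ioo 0 b))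
    (hcont : ContinuousOn g (Set.Ioo 0 b)) {x : ℝ} (hx : x ∈ Set.Ioo 0 b) :
    Tendsto (fun m => g^[m] x) atTop (𝓝 α) := by
  have hαb : α < b := hαp.trans hpb
  rcases le_total x α with hxα | hαx
  · have hsub : Set.Icc x α ⊆ Set.Ioo 0 b := Set.Icc_subset_Ioo hx.1 hαb
    exact tendsto_iterate_of_forall_self_lt hxα (hmono.mono hsub) (hcont.mono hsub) hgα fun t ht =>
      self_lt_map_of_convexOn_div hconv hα hgα hαp hgp hpb ⟨hx.1.trans_le ht.1, ht.2⟩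
  · have hsub : Set.Icc α x ⊆ Set.Ioo 0 b := Set.Icc_subset_Ioo hα hx.2
    exact tendsto_iterate_of_forall_lt_self hαx (hmono.mono hsub) (hcont.mono hsub) hgα fun t ht =>
      map_lt_self_of_convexOn_div hconv hα hgα hαp hgp hpb hgb ⟨ht.1, ht.2.trans_lt hx.2⟩

end ConvexRatio

section ArcsineMean

/-- The expectation of `u X` for `X` with the arcsine law on `[-1, 1]`, realised as `X = cos θ`
with `θ` uniform on `[0, π]`. -/
noncomputable def arcsineMean (u : ℝ → ℝ) : ℝ :=
  π⁻¹ * ∫ θ in (0 : ℝ)..π, u (cos θ)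

variable {u v : ℝ → ℝ}

theorem arcsineMean_const (c : ℝ) : arcsineMean (fun _ => c) = c := by
  simp [arcsineMean, pi_ne_zero]

theorem arcsineMean_const_mul (c : ℝ) (u : ℝ → ℝ) :
    arcsineMean (fun x => c * u x) = c * arcsineMean u := by
  simp only [arcsineMean, intervalIntegral.integral_const_mul, mul_left_comm]

theorem intervalIntegrable_comp_cos (hu : Continuous u) (a b : ℝ) :
    IntervalIntegrable (fun θ => u (cos θ)) MeasureTheory.volume a b :=
  (hu.comp continuous_cos).intervalIntegrable a b

theorem arcsineMean_sub (hu : Continuous u) (hv : Continuous v) :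
    arcsineMean (fun x => u x - v x) = arcsineMean u - arcsineMean v := by
  simp only [arcsineMean]
  rw [intervalIntegral.integral_sub (intervalIntegrable_comp_cos hu 0 π)
    (intervalIntegrable_comp_cos hv 0 π), mul_sub]

theorem arcsineMean_finsetSum {ι : Type*} (s : Finset ι) {u : ι → ℝ → ℝ}
    (hu : ∀ i ∈ s, Continuous (u i)) :
    arcsineMean (fun x => ∑ i ∈ s, u i x) = ∑ i ∈ s, arcsineMean (u i) := by
  simp only [arcsineMean]
  rw [intervalIntegral.integral_finsetSum fun i hi => intervalIntegrable_comp_cos (hu i hi) 0 π,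
    Finset.mul_sum]

theorem arcsineMean_mono (hu : Continuous u) (hv : Continuous v)
    (huv : ∀ x ∈ Set.Icc (-1) 1, u x ≤ v x) : arcsineMean u ≤ arcsineMean v :=
  mul_le_mul_of_nonneg_left
    (intervalIntegral.integral_mono_on pi_pos.le
      (intervalIntegrable_comp_cos hu _ _) (intervalIntegrable_comp_cos hv _ _)
      fun θ _ => huv _ (cos_mem_Icc θ))
    (inv_nonneg.2 pi_pos.le)

theorem arcsineMean_lt_arcsineMean (hu : Continuous u) (hv : Continuous v)
    (huv : ∀ x ∈ Set.Icc (-1) 1, u x ≤ v x) (hlt : u 0 < v 0) :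
    arcsineMean u < arcsineMean v := by
  refine mul_lt_mul_of_pos_left ?_ (inv_pos.2 pi_pos)
  refine intervalIntegral.integral_lt_integral_of_continuousOn_of_le_of_exists_lt pi_pos
    (hu.comp continuous_cos).continuousOn (hv.comp continuous_cos).continuousOn
    (fun θ _ => huv _ (cos_mem_Icc θ)) ⟨π / 2, ⟨pi_div_two_pos.le, half_le_self pi_pos.le⟩, ?_⟩
  rwa [cos_pi_div_two]

theorem convexOn_arcsineMean {E : Type*} [AddCommGroup E] [Module ℝ E] {s : Set E}
    {φ : E → ℝ → ℝ} (hcont : ∀ t ∈ s, Continuous (φ t))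
    (hφ : ∀ x ∈ Set.Icc (-1) 1, ConvexOn ℝ s fun t => φ t x) :
    ConvexOn ℝ s fun t => arcsineMean (φ t) :=
  (convexOn_intervalIntegral pi_pos.le
    (fun t ht => intervalIntegrable_comp_cos (hcont t ht) _ _)
    fun θ _ => hφ _ (cos_mem_Icc θ)).smul (inv_nonneg.2 pi_pos.le)

theorem arcsineMean_pow_add_two (n : ℕ) :
    arcsineMean (· ^ (n + 2)) = (n + 1) / (n + 2) * arcsineMean (· ^ n) := by
  simp only [arcsineMean]
  rw [integral_cos_pow]
  simp only [sin_zero, sin_pi, mul_zero, sub_zero, zero_div, zero_add]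
  ring

theorem arcsineMean_pow_odd (k : ℕ) : arcsineMean (· ^ (2 * k + 1)) = 0 := by
  induction k with
  | zero => simp [arcsineMean]
  | succ k ih => rw [show 2 * (k + 1) + 1 = 2 * k + 1 + 2 by ring, arcsineMean_pow_add_two, ih,
      mul_zero]

theorem arcsineMean_pow_even (k : ℕ) :
    arcsineMean (· ^ (2 * k)) = k.centralBinom / 4 ^ k := by
  induction k with
  | zero => simp [arcsineMean_const]
  | succ k ih =>
    have hrec : ((k : ℝ) + 1) * (k + 1).centralBinom = 2 * (2 * k + 1) * k.centralBinom := by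
      exact_mod_cast k.succ_mul_centralBinom_succ
    rw [show 2 * (k + 1) = 2 * k + 2 by ring, arcsineMean_pow_add_two, ih]
    have hk : (k : ℝ) + 1 ≠ 0 := by positivity
    rw [pow_succ]
    push_cast
    field_simp
    linear_combination -2 * hrec

end ArcsineMean

section Moments

theorem sum_range_succ_eq_sum_even {M : Type*} [AddCommMonoid M] (n : ℕ) {a : ℕ → M}
    (ha : ∀ k, a (2 * k + 1) = 0) :
    ∑ i ∈ range (n + 1), a i = ∑ k ∈ range (n / 2 + 1), a (2 * k) := by
  symm
  refine Finset.sum_of_injOn (2 * ·) (fun _ _ _ _ h => by simpa using h) ?_ ?_ fun _ _ => rfl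
  · intro k hk
    simp only [coe_range, Set.mem_Iio] at hk ⊢
    omega
  · intro i hi hnot
    rcases Nat.even_or_odd' i with ⟨k, rfl | rfl⟩
    · refine absurd ⟨k, ?_, rfl⟩ hnot
      simp only [coe_range, Set.mem_Iio, mem_range] at hi ⊢
      omega
    · exact ha k

theorem f_eq_arcsineMean (n : ℕ) (t : ℝ) :
    f n t = arcsineMean fun x => (t + (1 - t) * x) ^ n := by
  have hexpand (x : ℝ) : (t + (1 - t) * x) ^ n =
      ∑ i ∈ range (n + 1), (1 - t) ^ i * t ^ (n - i) * n.choose i * x ^ i := by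
    rw [add_comm, add_pow]
    exact sum_congr rfl fun i _ => by rw [mul_pow]; ring
  simp only [hexpand]
  rw [arcsineMean_finsetSum _ fun i _ => by fun_prop]
  simp only [arcsineMean_const_mul]
  rw [sum_range_succ_eq_sum_even n fun k => by rw [arcsineMean_pow_odd, mul_zero], f]
  refine sum_congr rfl fun k _ => ?_
  rw [arcsineMean_pow_even, Nat.centralBinom_eq_two_mul_choose, div_pow, pow_mul 2 2 k,
    show (2 : ℝ) ^ 2 = 4 by norm_num]
  ring

theorem continuous_f (n : ℕ) : Continuous (f n) := by
  unfold f
  fun_prop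

theorem f_one_right (n : ℕ) : f n 1 = 1 := by
  simp [f_eq_arcsineMean, arcsineMean_const]

theorem f_one_left (t : ℝ) : f 1 t = t := by
  simp [f]

theorem f_nonneg (n : ℕ) {t : ℝ} (ht : 0 ≤ t) : 0 ≤ f n t :=
  sum_nonneg fun k _ => by
    have hpow := (even_two_mul k).pow_nonneg ((1 - t) / 2)
    positivity

theorem f_le_one (n : ℕ) {t : ℝ} (ht : t ∈ Set.Icc 0 1) : f n t ≤ 1 := by
  rw [f_eq_arcsineMean]
  refine (arcsineMean_mono (by fun_prop) continuous_const fun x hx => ?_).trans_eq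
    (arcsineMean_const 1)
  have habs : |t + (1 - t) * x| ≤ 1 :=
    abs_le.2 ⟨by nlinarith [ht.1, ht.2, hx.1], by nlinarith [ht.2, hx.2]⟩
  exact (le_abs_self _).trans (by rw [abs_pow]; exact pow_le_one₀ (abs_nonneg _) habs)

theorem strictMono_f {n : ℕ} (hn : Odd n) : StrictMono (f n) := by
  intro s t hst
  rw [f_eq_arcsineMean, f_eq_arcsineMean]
  refine arcsineMean_lt_arcsineMean (by fun_prop) (by fun_prop) (fun x hx => ?_)
    (hn.strictMono_pow (by simpa using hst))
  exact hn.strictMono_pow.monotone (by nlinarith [hx.2])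

theorem f_half_lt {n : ℕ} (hn : 2 ≤ n) : f n (1 / 2) < 1 / 2 := by
  have hmean : f 1 (1 / 2) = 1 / 2 := f_one_left (1 / 2)
  refine lt_of_lt_of_eq ?_ hmean
  rw [f_eq_arcsineMean, f_eq_arcsineMean]
  simp only [pow_one]
  refine arcsineMean_lt_arcsineMean (by fun_prop) (by fun_prop) (fun x hx => ?_) ?_
  · exact pow_le_of_le_one (by linarith [hx.1]) (by linarith [hx.2]) (by lia)
  · exact pow_lt_self_of_lt_one₀ (by norm_num) (by norm_num) hn

theorem f_half_le {n : ℕ} (hn : n ≠ 0) : f n (1 / 2) ≤ 1 / 2 := by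
  rcases eq_or_ne n 1 with rfl | hn1
  · exact (f_one_left _).le
  · exact (f_half_lt (by lia)).le

/-- The continuous extension of `f n t / t` to `t = 0` for odd `n`, written as an average of
even powers of affine functions of `t`. -/
noncomputable def fRatio (n : ℕ) (t : ℝ) : ℝ :=
  arcsineMean fun x => ∫ w in (0 : ℝ)..1, n * (w * t + (1 - t) * x) ^ (n - 1)

theorem continuous_integral_mul_pow (n : ℕ) (t : ℝ) :
    Continuous fun x : ℝ => ∫ w in (0 : ℝ)..1, n * (w * t + (1 - t) * x) ^ (n - 1) :=
  intervalIntegral.continuous_parametric_intervalIntegral_of_continuous' (by fun_prop) _ _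

theorem mul_integral_mul_pow (n : ℕ) (t c : ℝ) :
    t * ∫ w in (0 : ℝ)..1, n * (w * t + c) ^ (n - 1) = (t + c) ^ n - c ^ n := by
  have hderiv (w : ℝ) : HasDerivAt (fun w => (w * t + c) ^ n)
      (t * (n * (w * t + c) ^ (n - 1))) w := by
    refine ((((hasDerivAt_id w).mul_const t).add_const c).pow n).congr_deriv ?_
    simp only [id_eq, one_mul]
    ring
  rw [← intervalIntegral.integral_const_mul,
    intervalIntegral.integral_eq_sub_of_hasDerivAt (fun w _ => hderiv w)
      (Continuous.intervalIntegrable (by fun_prop) _ _)]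
  simp

theorem f_eq_mul_fRatio {n : ℕ} (hn : Odd n) (t : ℝ) : f n t = t * fRatio n t := by
  have hodd : arcsineMean (fun x => ((1 - t) * x) ^ n) = 0 := by
    obtain ⟨m, rfl⟩ := hn
    simp only [mul_pow, arcsineMean_const_mul, arcsineMean_pow_odd, mul_zero]
  rw [fRatio, ← arcsineMean_const_mul]
  simp only [mul_integral_mul_pow]
  rw [arcsineMean_sub (by fun_prop) (by fun_prop), hodd, sub_zero, f_eq_arcsineMean]

theorem convexOn_fRatio {n : ℕ} (hn : Odd n) : ConvexOn ℝ Set.univ (fRatio n) := by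
  refine convexOn_arcsineMean (fun t _ => continuous_integral_mul_pow n t) fun x _ => ?_
  refine convexOn_intervalIntegral zero_le_one
    (fun t _ => Continuous.intervalIntegrable (by fun_prop) _ _) fun w _ => ?_
  have hpow : ConvexOn ℝ Set.univ fun y : ℝ => y ^ (n - 1) :=
    (Nat.Odd.sub_odd hn odd_one).convexOn_pow
  have haffine := (hpow.comp_affineMap (AffineMap.lineMap x w)).smul n.cast_nonneg
  refine haffine.congr fun t _ => ?_
  simp only [Function.comp_apply, AffineMap.lineMap_apply_ring, smul_eq_mul]
  ring

theorem fRatio_zero (m : ℕ) : fRatio (2 * m + 1) 0 = (2 * m + 1) * (m.centralBinom / 4 ^ m) := by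
  simp [fRatio, arcsineMean_const_mul, arcsineMean_pow_even]

theorem one_lt_fRatio_zero {n : ℕ} (hn : Odd n) (hn2 : 2 ≤ n) : 1 < fRatio n 0 := by
  obtain ⟨m, rfl⟩ := hn
  have hbinom : (4 : ℝ) ^ m ≤ 2 * m * m.centralBinom := by
    exact_mod_cast m.four_pow_le_two_mul_self_mul_centralBinom (by lia)
  have hpos : (0 : ℝ) < m.centralBinom := mod_cast m.centralBinom_pos
  rw [fRatio_zero, ← mul_div_assoc, one_lt_div (by positivity)]
  linarith

theorem one_le_fRatio_zero {n : ℕ} (hn : Odd n) : 1 ≤ fRatio n 0 := by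
  rcases eq_or_ne n 1 with rfl | hn1
  · simpa using (fRatio_zero 0).ge
  · exact (one_lt_fRatio_zero hn (by grind)).le

end Moments

section OffspringMap

/-- The map `t ↦ ∑ q n * f n t` attached to the offspring weights `q`, which the paper
denotes by `f`. -/
noncomputable def offspringMap (q : ℕ → ℝ) (t : ℝ) : ℝ :=
  ∑' n, q n * f n t

variable {q : ℕ → ℝ}

theorem exists_two_le_and_pos (hq : ∀ n, 0 ≤ q n) (hq0 : q 0 = 0) (hq1 : q 1 ≠ 1)
    (hsum : HasSum q 1) : ∃ n, 2 ≤ n ∧ 0 < q n := by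
  by_contra! hle
  have hzero : ∀ n ≠ 1, q n = 0 := by
    intro n hn
    rcases Nat.lt_or_ge n 2 with hn2 | hn2
    · obtain rfl : n = 0 := by lia
      exact hq0
    · exact (hle n hn2).antisymm (hq n)
  exact hq1 ((hasSum_single 1 hzero).unique hsum)

theorem offspringMap_one (hsum : HasSum q 1) : offspringMap q 1 = 1 := by
  simp only [offspringMap, f_one_right, mul_one, hsum.tsum_eq]

theorem mul_f_eq_mul_fRatio (hq_even : ∀ n, Even n → q n = 0) (n : ℕ) (t : ℝ) :
    q n * f n t = t * (q n * fRatio n t) := by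
  rcases n.even_or_odd with hn | hn
  · simp only [hq_even n hn, zero_mul, mul_zero]
  · rw [f_eq_mul_fRatio hn, mul_left_comm]

section Nonneg

variable (hq : ∀ n, 0 ≤ q n)
include hq

theorem mul_f_nonneg (n : ℕ) {t : ℝ} (ht : 0 ≤ t) : 0 ≤ q n * f n t :=
  mul_nonneg (hq n) (f_nonneg n ht)

theorem mul_f_le (n : ℕ) {t : ℝ} (ht : t ∈ Set.Icc 0 1) : q n * f n t ≤ q n :=
  mul_le_of_le_one_right (hq n) (f_le_one n ht)

theorem summable_mul_f (hsum : Summable q) {t : ℝ} (ht : t ∈ Set.Icc 0 1) :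
    Summable fun n => q n * f n t :=
  hsum.of_nonneg_of_le (fun n => mul_f_nonneg hq n ht.1) fun n => mul_f_le hq n ht

theorem continuousOn_offspringMap (hsum : Summable q) :
    ContinuousOn (offspringMap q) (Set.Icc 0 1) := by
  refine continuousOn_tsum (fun n => (continuous_const.mul (continuous_f n)).continuousOn) hsum
    fun n t ht => ?_
  rw [Real.norm_of_nonneg (mul_f_nonneg hq n ht.1)]
  exact mul_f_le hq n ht

variable (hq_even : ∀ n, Even n → q n = 0)
include hq_even

theorem mul_le_mul_of_forall_odd {u v : ℕ → ℝ} (huv : ∀ n, Odd n → u n ≤ v n) (n : ℕ) :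
    q n * u n ≤ q n * v n := by
  rcases n.even_or_odd with hn | hn
  · simp only [hq_even n hn, zero_mul, le_refl]
  · exact mul_le_mul_of_nonneg_left (huv n hn) (hq n)

theorem strictMonoOn_offspringMap (hsum : Summable q) {N : ℕ} (hN : 0 < q N) :
    StrictMonoOn (offspringMap q) (Set.Icc 0 1) := by
  intro s hs t ht hst
  have hNodd : Odd N := Nat.not_even_iff_odd.1 (mt (hq_even N) hN.ne')
  exact Summable.tsum_lt_tsum (i := N)
    (mul_le_mul_of_forall_odd hq hq_even fun n hn => (strictMono_f hn hst).le)
    (mul_lt_mul_of_pos_left (strictMono_f hNodd hst) hN)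
    (summable_mul_f hq hsum hs) (summable_mul_f hq hsum ht)

theorem offspringMap_half_lt (hsum : HasSum q 1) {N : ℕ} (hN2 : 2 ≤ N) (hN : 0 < q N) :
    offspringMap q (1 / 2) < 1 / 2 := by
  have hhalf : HasSum (fun n => q n * (1 / 2)) (1 / 2) := by
    simpa only [one_mul] using hsum.mul_right (1 / 2)
  calc offspringMap q (1 / 2) < ∑' n, q n * (1 / 2) :=
        Summable.tsum_lt_tsum (i := N)
          (mul_le_mul_of_forall_odd hq hq_even fun n hn => f_half_le hn.pos.ne')
          (mul_lt_mul_of_pos_left (f_half_lt hN2) hN)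
          (summable_mul_f hq hsum.summable ⟨by norm_num, by norm_num⟩) hhalf.summable
    _ = 1 / 2 := hhalf.tsum_eq

theorem convexOn_mul_fRatio (n : ℕ) : ConvexOn ℝ Set.univ fun t => q n * fRatio n t := by
  rcases n.even_or_odd with hn | hn
  · simpa only [hq_even n hn, zero_mul] using convexOn_const 0 convex_univ
  · exact (convexOn_fRatio hn).smul (hq n)

theorem convexOn_offspringMap_div (hsum : Summable q) :
    ConvexOn ℝ (Set.Ioc 0 1) fun t => offspringMap q t / t := by
  have hdiv (t : ℝ) (ht : t ∈ Set.Ioc 0 1) (n : ℕ) : q n * f n t / t = q n * fRatio n t := by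
    rw [mul_f_eq_mul_fRatio hq_even, mul_div_cancel_left₀ _ ht.1.ne']
  have hconv : ConvexOn ℝ (Set.Ioc 0 1) fun t => ∑' n, q n * fRatio n t := by
    refine convexOn_tsum (convex_Ioc 0 1) (fun t ht => ?_) fun n =>
      (convexOn_mul_fRatio hq hq_even n).subset (Set.subset_univ _) (convex_Ioc 0 1)
    simpa only [hdiv t ht] using (summable_mul_f hq hsum ⟨ht.1.le, ht.2⟩).div_const t
  refine hconv.congr fun t ht => ?_
  simp only [offspringMap, ← tsum_div_const, hdiv t ht]

theorem exists_one_lt_sum_mul_fRatio_zero (hsum : HasSum q 1) {N : ℕ} (hN2 : 2 ≤ N)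
    (hN : 0 < q N) : ∃ S : Finset ℕ, 1 < ∑ n ∈ S, q n * fRatio n 0 := by
  have hNodd : Odd N := Nat.not_even_iff_odd.1 (mt (hq_even N) hN.ne')
  set ε := fRatio N 0 - 1 with hε
  have hεpos : 0 < ε := sub_pos.2 (one_lt_fRatio_zero hNodd hN2)
  have hlower : HasSum (fun n => q n * (1 + if n = N then ε else 0)) (1 + q N * ε) := by
    convert! hsum.add (hasSum_ite_eq N (q N * ε)) using 2 with n
    split_ifs with hnN
    · rw [hnN, mul_add, mul_one]
    · rw [mul_add, mul_one, mul_zero]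
  obtain ⟨S, hS⟩ := (hlower.eventually (lt_mem_nhds (lt_add_of_pos_right 1 (by positivity)))).exists
  have hle (n : ℕ) (hn : Odd n) : (1 + if n = N then ε else 0) ≤ fRatio n 0 := by
    split_ifs with hnN
    · rw [hnN, hε, add_sub_cancel]
    · simpa only [add_zero] using one_le_fRatio_zero hn
  exact ⟨S, hS.trans_le (sum_le_sum fun n _ => mul_le_mul_of_forall_odd hq hq_even hle n)⟩

theorem eventually_self_lt_offspringMap (hsum : HasSum q 1) {N : ℕ} (hN2 : 2 ≤ N) (hN : 0 < q N) :
    ∀ᶠ t in 𝓝[>] 0, t < offspringMap q t := by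
  obtain ⟨S, hS⟩ := exists_one_lt_sum_mul_fRatio_zero hq hq_even hsum hN2 hN
  have hcont : Continuous fun t => ∑ n ∈ S, q n * fRatio n t :=
    continuous_finsetSum _ fun n _ =>
      continuousOn_univ.1 ((convexOn_mul_fRatio hq hq_even n).continuousOn isOpen_univ)
  have hnear : ∀ᶠ t in 𝓝[>] 0, 1 < ∑ n ∈ S, q n * fRatio n t :=
    nhdsWithin_le_nhds (hcont.continuousAt.eventually (lt_mem_nhds hS))
  filter_upwards [hnear, Ioo_mem_nhdsGT zero_lt_one] with t hSt ht
  calc t < t * ∑ n ∈ S, q n * fRatio n t := lt_mul_of_one_lt_right ht.1 hSt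
    _ = ∑ n ∈ S, q n * f n t := by simp only [mul_sum, mul_f_eq_mul_fRatio hq_even]
    _ ≤ offspringMap q t :=
      (summable_mul_f hq hsum.summable ⟨ht.1.le, ht.2.le⟩).sum_le_tsum S
        fun n _ => mul_f_nonneg hq n ht.1.le

theorem exists_offspringMap_eq_self (hsum : HasSum q 1) {N : ℕ} (hN2 : 2 ≤ N) (hN : 0 < q N) :
    ∃ α ∈ Set.Ioo 0 (1 / 2), offspringMap q α = α := by
  have hhalf := offspringMap_half_lt hq hq_even hsum hN2 hN
  obtain ⟨δ, hδlt, hδ⟩ := ((eventually_self_lt_offspringMap hq hq_even hsum hN2 hN).and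
    (Ioo_mem_nhdsGT one_half_pos)).exists
  have hcont := (continuousOn_offspringMap hq hsum.summable).mono
    (Set.Icc_subset_Icc hδ.1.le one_half_lt_one.le)
  obtain ⟨α, hα, hfix⟩ := exists_mem_Icc_isFixedPt hcont hδ.2.le hδlt.le hhalf.le
  have hαne : α ≠ 1 / 2 := by
    rintro rfl
    exact hhalf.ne hfix
  exact ⟨α, ⟨hδ.1.trans_le hα.1, hα.2.lt_of_ne hαne⟩, hfix⟩

end Nonneg

end OffspringMap

theorem stmt_18_general (q : ℕ → ℝ) (hq : ∀ n, 0 ≤ q n) (hq_even : ∀ n, Even n → q n = 0)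
    (hq_one : q 1 ≠ 1) (hsum : HasSum q 1) :
    StrictMonoOn (offspringMap q) (Set.Icc 0 1) ∧
    ∃ α ∈ Set.Ioo (0 : ℝ) 1, offspringMap q α = α ∧ α < 1 / 2 ∧
      (∀ t ∈ Set.Ioo (0 : ℝ) 1, offspringMap q t = t → t = α) ∧
      ∀ x₀ ∈ Set.Ioo (0 : ℝ) 1, Tendsto (fun m => (offspringMap q)^[m] x₀) atTop (𝓝 α) := by
  obtain ⟨N, hN2, hN⟩ := exists_two_le_and_pos hq (hq_even 0 Even.zero) hq_one hsum
  have hmono := strictMonoOn_offspringMap hq hq_even hsum.summable hN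
  have hcont := continuousOn_offspringMap hq hsum.summable
  have hconv := convexOn_offspringMap_div hq hq_even hsum.summable
  have hhalf := offspringMap_half_lt hq hq_even hsum hN2 hN
  have hone := (offspringMap_one hsum).le
  obtain ⟨α, ⟨hα0, hαhalf⟩, hfix⟩ := exists_offspringMap_eq_self hq hq_even hsum hN2 hN
  refine ⟨hmono, α, ⟨hα0, hαhalf.trans one_half_lt_one⟩, hfix, hαhalf, fun t ht => ?_,
    fun x₀ hx₀ => ?_⟩
  · exact eq_of_convexOn_div_of_map_eq_self hconv hα0 hfix hαhalf hhalf one_half_lt_one hone ht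
  · exact tendsto_iterate_of_convexOn_div hconv hα0 hfix hαhalf hhalf one_half_lt_one hone
      (hmono.monotoneOn.mono Set.Ioo_subset_Icc_self) (hcont.mono Set.Ioo_subset_Icc_self) hx₀

theorem stmt_18 (q : ℕ → ℝ) (hq : ∀ n, 0 ≤ q n)
    (hsupp_even : ∀ n, Even n → q n = 0) (hsupp_low : ∀ n < 2, q n = 0)
    (hsum : HasSum q 1)
    (hmoment : Summable fun n : ℕ => (n : ℝ) ^ 2 * q n)
    (g : ℝ → ℝ) (hg : ∀ t, g t = ∑' n : ℕ, q n * f n t) :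
    StrictMonoOn g (Set.Icc (0 : ℝ) 1) ∧
    ∃ α : ℝ, α ∈ Set.Ioo (0 : ℝ) 1 ∧ g α = α ∧ α < 1 / 2 ∧
      (∀ t ∈ Set.Ioo (0 : ℝ) 1, g t = t → t = α) ∧
      ∀ x₀ ∈ Set.Ioo (0 : ℝ) 1,
        Filter.Tendsto (fun m => g^[m] x₀) Filter.atTop (nhds α) := by
  obtain rfl : g = offspringMap q := funext hg
  exact stmt_18_general q hq hsupp_even (by simp [hsupp_low 1 one_lt_two]) hsum
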